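/- arXiv:1903.05270 — 3 statements merged into one kernel-verified Lean document; each statement's English description precedes it below -/
import Mathlib

section
/- For m ≥ 2 and real x > 1/2, the moment identity (π/2) ∫_{-∞}^{∞} sech²(πw) (x + iw - 1/2)^{-m} dw = (-1)^{m-1} ψ^{(m)}(x)/(m-1)!, where ψ^{(m)} is the m-th polygamma function; in particular at x = 1 this equals m·ζ(m+1). -/
open MeasureTheory Real

/-- The `m`-th polygamma function `ψ^{(m)}(x)`, the `(m+1)`-st derivative of `log Γ`. -/
noncomputable def polygamma (m : ℕ) (x : ℝ) : ℝ :=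
  iteratedDeriv (m + 1) (fun y => Real.log (Real.Gamma y)) x

section Aux

open Set Filter Topology

lemma aux_summable (e : ℝ) (he : 0 < e) (k : ℕ) (hk : 2 ≤ k) :
    Summable (fun n : ℕ => 1 / (e + n) ^ k) := by
  have := (Real.summable_one_div_nat_add_rpow e k).2 (by exact_mod_cast hk)
  refine this.congr fun n => ?_
  rw [abs_of_pos (by positivity), Real.rpow_natCast, add_comm]

lemma aux_step (k : ℕ) (hk : 2 ≤ k) (y : ℝ) (hy : 0 < y) :
    HasDerivAt (fun z : ℝ => ∑' n : ℕ, 1 / (z + n) ^ k)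
      (-(k : ℝ) * ∑' n : ℕ, 1 / (y + n) ^ (k + 1)) y := by
  rw [← tsum_mul_left]
  have hs := (aux_summable (y/2) (by positivity) (k + 1) (by omega)).mul_left (k : ℝ)
  refine hasDerivAt_tsum_of_isPreconnected (t := Ioi (y/2)) (y₀ := y) hs isOpen_Ioi
    isPreconnected_Ioi (g := fun (n : ℕ) (z : ℝ) => 1 / (z + n) ^ k)
    (g' := fun (n : ℕ) (z : ℝ) => -(k : ℝ) * (1 / (z + n) ^ (k + 1))) ?_ ?_ ?_ ?_ ?_
  · intro n z hz
    have hz0 : 0 < z := lt_trans (by positivity) (mem_Ioi.1 hz)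
    have hzn : 0 < z + n := by positivity
    have h := (((hasDerivAt_id z).add_const (n : ℝ)).pow k).fun_inv (pow_ne_zero k hzn.ne')
    simp only [one_div]
    convert! h using 1
    obtain ⟨j, rfl⟩ : ∃ j, k = j + 1 := ⟨k - 1, by omega⟩
    simp
    field_simp
    ring
  · intro n z hz
    have hz := mem_Ioi.1 hz
    have hz0 : 0 < z := lt_trans (by positivity) hz
    rw [norm_mul, norm_neg, Real.norm_of_nonneg (by positivity), Real.norm_of_nonneg (by positivity)]
    gcongr
  · exact half_lt_self hy
  · exact aux_summable y hy k hk
  · exact half_lt_self hy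

noncomputable def auxA (n : ℕ) (y : ℝ) : ℝ :=
  y * (log (n + 2) - log (n + 1)) + log (n + 2) - log (y + (n + 2))

lemma auxA_tendsto (y : ℝ) (hy : 0 < y) :
    Tendsto (fun N : ℕ => ∑ n ∈ Finset.range N, auxA n y) atTop
      (𝓝 (log (Real.Gamma y) + log y + log (y + 1))) := by
  have h := (tendsto_add_atTop_iff_nat 1).2 (BohrMollerup.tendsto_log_gamma hy)
  have h2 := (h.add_const (log y)).add_const (log (y + 1))
  refine h2.congr fun N => ?_
  induction N with
  | zero => simp [BohrMollerup.logGammaSeq, Finset.sum_range_succ]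
  | succ N ih =>
    rw [Finset.sum_range_succ, ← ih]
    simp only [BohrMollerup.logGammaSeq, auxA]
    rw [Finset.sum_range_succ _ (N + 1 + 1), Nat.factorial_succ (N + 1), Nat.cast_mul,
      Real.log_mul (by positivity) (by positivity)]
    push_cast
    ring_nf

lemma auxA_deriv (n : ℕ) (y : ℝ) (hy : 0 < y) :
    HasDerivAt (auxA n) (log (n + 2) - log (n + 1) - 1 / (y + (n + 2))) y := by
  unfold auxA
  have h1 := ((hasDerivAt_id y).mul_const (log ((n:ℝ) + 2) - log (n + 1))).add_const (log ((n:ℝ) + 2))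
  have h2 := ((hasDerivAt_id y).add_const ((n : ℝ) + 2)).log (by simp; positivity)
  convert! h1.sub h2 using 1
  simp

lemma aux_logdiff (n : ℕ) : 1 / ((n : ℝ) + 2) ≤ log (n + 2) - log (n + 1) ∧
    log (n + 2) - log (n + 1) ≤ 1 / ((n : ℝ) + 1) := by
  rw [← Real.log_div (by positivity) (by positivity)]
  constructor
  · have := Real.one_sub_inv_le_log_of_pos (x := ((n : ℝ) + 2) / (n + 1)) (by positivity)
    refine le_trans (le_of_eq ?_) this
    field_simp
    ring
  · have := Real.log_le_sub_one_of_pos (x := ((n : ℝ) + 2) / (n + 1)) (by positivity)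
    refine le_trans this (le_of_eq ?_)
    field_simp
    ring

lemma auxA_bound (R : ℝ) (n : ℕ) (y : ℝ) (hy : 0 < y) (hR : y < R) :
    ‖log ((n:ℝ) + 2) - log (n + 1) - 1 / (y + (n + 2))‖ ≤ (R + 1) * (1 / (1 + (n : ℝ)) ^ 2) := by
  obtain ⟨h1, h2⟩ := aux_logdiff n
  have h3 : 1 / (y + ((n:ℝ) + 2)) ≤ 1 / ((n : ℝ) + 2) :=
    one_div_le_one_div_of_le (by positivity) (by linarith)
  rw [Real.norm_of_nonneg (by linarith)]
  have h4 : 1 / ((n : ℝ) + 1) - 1 / (y + ((n:ℝ) + 2)) ≤ (R + 1) * (1 / (1 + (n : ℝ)) ^ 2) := by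
    have : 1 / ((n : ℝ) + 1) - 1 / (y + ((n:ℝ) + 2)) = (y + 1) * (1 / ((1 + (n:ℝ)) * (y + (n + 2)))) := by
      field_simp; ring
    rw [this]
    gcongr ?_ * (1 / ?_)
    · linarith
    · linarith
    · rw [sq]; exact mul_le_mul_of_nonneg_left (by linarith) (by positivity)
  linarith

lemma auxA_summable_one : Summable (fun n => auxA n 1) := by
  have h := auxA_tendsto 1 one_pos
  refine ((hasSum_iff_tendsto_nat_of_nonneg ?_ _).2 h).summable
  intro n
  have h1 := (aux_logdiff n).1
  have h2 := (aux_logdiff (n+1)).2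
  unfold auxA
  push_cast at h2
  ring_nf at h1 h2 ⊢
  linarith

lemma auxA_hasSum (y : ℝ) (hy : 0 < y) :
    HasSum (fun n => auxA n y) (log (Real.Gamma y) + log y + log (y + 1)) := by
  have hs : Summable (fun n => auxA n y) := by
    refine summable_of_summable_hasDerivAt_of_isPreconnected (t := Ioo 0 (y + 2)) (y₀ := 1)
      ((aux_summable 1 one_pos 2 le_rfl).mul_left (y + 2 + 1)) isOpen_Ioo isPreconnected_Ioo
      (fun n z hz => auxA_deriv n z hz.1) (fun n z hz => auxA_bound _ n z hz.1 hz.2) ?_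
      auxA_summable_one ?_
    · constructor <;> linarith
    · constructor <;> linarith
  exact (hs.hasSum_iff_tendsto_nat).2 (auxA_tendsto y hy)

lemma logGamma_deriv (y : ℝ) (hy : 0 < y) :
    HasDerivAt (fun y => log (Real.Gamma y))
      ((∑' n : ℕ, (log ((n:ℝ) + 2) - log (n + 1) - 1 / (y + (n + 2)))) - 1 / y - 1 / (y + 1)) y := by
  have h := hasDerivAt_tsum_of_isPreconnected (t := Ioo 0 (y + 2)) (y₀ := 1) (y := y)
      ((aux_summable 1 one_pos 2 le_rfl).mul_left (y + 2 + 1)) isOpen_Ioo isPreconnected_Ioo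
      (fun n z hz => auxA_deriv n z hz.1) (fun n z hz => auxA_bound _ n z hz.1 hz.2)
      (by constructor <;> linarith)
      auxA_summable_one (by constructor <;> linarith)
  have h1 := (hasDerivAt_id y).log hy.ne'
  have h2 := ((hasDerivAt_id y).add_const 1).log (by simp; positivity)
  refine ((h.sub h1).sub h2).congr_of_eventuallyEq ?_
  filter_upwards [lt_mem_nhds hy] with z hz
  simp only [Pi.sub_apply, (auxA_hasSum z hz).tsum_eq, id]
  ring

lemma logGamma_deriv2 (y : ℝ) (hy : 0 < y) :
    HasDerivAt (deriv (fun y => log (Real.Gamma y))) (∑' n : ℕ, 1 / (y + n) ^ 2) y := by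
  have h := hasDerivAt_tsum_of_isPreconnected (t := Ioi 0) (y₀ := y) (y := y)
      (g := fun (n : ℕ) (y : ℝ) => (log ((n:ℝ) + 2) - log (n + 1) - 1 / (y + (n + 2))))
      (g' := fun (n : ℕ) (y : ℝ) => 1 / (y + ((n + 2 : ℕ) : ℝ)) ^ 2)
      (aux_summable 2 two_pos 2 le_rfl) isOpen_Ioi isPreconnected_Ioi
      ?_ ?_ hy ?_ hy
  · have h1 := (hasDerivAt_inv hy.ne')
    have h2 := (((hasDerivAt_id y).add_const 1).fun_inv (by simp; positivity))
    have h3 := ((h.sub h1).sub h2)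
    have hs := aux_summable y hy 2 le_rfl
    rw [← hs.sum_add_tsum_nat_add 2]
    refine (h3.congr_of_eventuallyEq ?_).congr_deriv ?_
    · filter_upwards [lt_mem_nhds hy] with z hz
      simp [(logGamma_deriv z hz).deriv]
    · simp [Finset.sum_range_succ]
      ring
  · intro n z hz
    have hz := mem_Ioi.1 hz
    have h2 := (((hasDerivAt_id z).add_const ((n:ℝ) + 2)).fun_inv (by simp; positivity))
    have h3 := h2.const_sub (log ((n:ℝ) + 2) - log (n + 1))
    convert! h3 using 1
    · simp
    · simp [neg_div]
  · intro n z hz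
    have hz := mem_Ioi.1 hz
    rw [Real.norm_of_nonneg (by positivity)]
    push_cast
    gcongr 1 / ?_ ^ 2
    linarith
  · refine Summable.of_norm_bounded ((aux_summable 1 one_pos 2 le_rfl).mul_left (y + 1 + 1)) ?_
    intro n
    exact auxA_bound _ n y hy (by linarith)

lemma iter_logGamma (j : ℕ) : ∀ y : ℝ, 0 < y →
    iteratedDeriv (j + 2) (fun y => log (Real.Gamma y)) y =
      (-1) ^ j * (j + 1).factorial * ∑' n : ℕ, 1 / (y + n) ^ (j + 2) := by
  induction j with
  | zero =>
    intro y hy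
    rw [iteratedDeriv_succ, iteratedDeriv_one, (logGamma_deriv2 y hy).deriv]
    simp
  | succ j ih =>
    intro y hy
    rw [iteratedDeriv_succ]
    have h := ((aux_step (j + 2) (by omega) y hy).const_mul ((-1 : ℝ) ^ j * (j + 1).factorial))
    have h2 := h.congr_of_eventuallyEq (f₁ := iteratedDeriv (j + 2) (fun y => log (Real.Gamma y))) (by
      filter_upwards [lt_mem_nhds hy] with z hz using ih z hz)
    rw [h2.deriv, Nat.factorial_succ (j + 1)]
    push_cast
    ring

lemma polygamma_eq (m : ℕ) (hm : 1 ≤ m) (x : ℝ) (hx : 0 < x) :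
    (-1 : ℝ) ^ (m - 1) * polygamma m x / Nat.factorial (m - 1) =
      m * ∑' n : ℕ, 1 / (x + n) ^ (m + 1) := by
  obtain ⟨j, rfl⟩ : ∃ j, m = j + 1 := ⟨m - 1, by omega⟩
  rw [polygamma, iter_logGamma j x hx, Nat.factorial_succ]
  have : ((-1 : ℝ) ^ j) * (-1) ^ j = 1 := by rw [← mul_pow]; simp
  simp only [Nat.add_sub_cancel]
  push_cast
  field_simp
  rw [sq, this]
  ring

lemma sig_deriv (w : ℝ) : HasDerivAt (fun w => Real.sigmoid (2 * π * w))
    ((π / 2) * (1 / Real.cosh (π * w)) ^ 2) w := by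
  have h := (hasDerivAt_sigmoid (2 * π * w)).comp w ((hasDerivAt_id w).const_mul (2 * π))
  refine h.congr_deriv ?_
  rw [← Real.sigmoid_neg, Real.sigmoid_def, Real.sigmoid_def, Real.cosh_eq]
  have e1 : Real.exp (2 * π * w) = Real.exp (π * w) ^ 2 := by
    rw [← Real.exp_nat_mul]; congr 1; push_cast; ring
  rw [neg_neg, Real.exp_neg, Real.exp_neg, e1]
  have := Real.exp_pos (π * w)
  field_simp
  ring

lemma sig_image : (fun w => Real.sigmoid (2 * π * w)) '' univ = Ioo 0 1 := by
  rw [← Real.range_sigmoid, image_univ]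
  ext y
  constructor
  · rintro ⟨w, rfl⟩; exact ⟨_, rfl⟩
  · rintro ⟨w, rfl⟩
    refine ⟨w / (2 * π), ?_⟩
    simp only
    congr 1
    field_simp

lemma sig_inj : InjOn (fun w => Real.sigmoid (2 * π * w)) univ := by
  intro a _ b _ h
  have := Real.sigmoid_injective h
  have hp := Real.pi_pos
  exact mul_left_cancel₀ (by positivity) this

lemma sech_integrable : Integrable (fun w : ℝ => (1 / Real.cosh (π * w)) ^ 2) := by
  have h := (integrableOn_image_iff_integrableOn_abs_deriv_smul MeasurableSet.univ
    (fun w _ => (sig_deriv w).hasDerivWithinAt) sig_inj (fun _ => (1 : ℝ))).1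
  rw [sig_image, integrableOn_univ] at h
  have h2 := (h (by simp)).const_mul (2 / π)
  refine h2.congr (ae_of_all _ fun w => ?_)
  have hp := Real.pi_pos
  simp only [smul_eq_mul]
  rw [abs_of_nonneg (by positivity)]
  field_simp

lemma fourier_sech (t : ℝ) (ht : 0 < t) :
    (π / 2 : ℂ) * ∫ w : ℝ, ((1 / Real.cosh (π * w)) ^ 2 : ℝ) • Complex.exp (-(Complex.I * w * t)) =
      t * Complex.exp (-(t / 2)) / (1 - Complex.exp (-t)) := by
  have hp := Real.pi_pos
  have hpc : (π : ℂ) ≠ 0 := by exact_mod_cast hp.ne'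
  have htc : (t : ℂ) ≠ 0 := by exact_mod_cast ht.ne'
  set s : ℂ := Complex.I * t / (2 * π) with hs
  have hsre : s.re = 0 := by
    have : s = ((t / (2 * π) : ℝ) : ℂ) * Complex.I := by rw [hs]; push_cast; ring
    rw [this, Complex.re_ofReal_mul]; simp
  have hs0 : s ≠ 0 := by
    rw [hs]; exact div_ne_zero (mul_ne_zero Complex.I_ne_zero htc) (mul_ne_zero two_ne_zero hpc)
  have hB := Complex.Gamma_mul_Gamma_eq_betaIntegral (s := 1 - s) (t := 1 + s)
    (by simp [hsre]) (by simp [hsre])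
  have hint := integral_image_eq_integral_abs_deriv_smul MeasurableSet.univ
    (fun w _ => (sig_deriv w).hasDerivWithinAt) sig_inj
    (fun u : ℝ => (u : ℂ) ^ (1 - s - 1) * (1 - (u : ℂ)) ^ (1 + s - 1))
  rw [sig_image, setIntegral_univ] at hint
  rw [Complex.betaIntegral, intervalIntegral.integral_of_le zero_le_one,
    integral_Ioc_eq_integral_Ioo, hint] at hB
  rw [show (1 - s + (1 + s)) = ((1 : ℕ) : ℂ) + 1 by push_cast; ring, Complex.Gamma_nat_eq_factorial,
    Nat.factorial_one, Nat.cast_one, one_mul, add_comm 1 s, Complex.Gamma_add_one s hs0,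
    mul_left_comm, mul_comm (Complex.Gamma _), Complex.Gamma_mul_Gamma_one_sub] at hB
  rw [← integral_const_mul]
  have key : ∀ w : ℝ, |π / 2 * (1 / Real.cosh (π * w)) ^ 2| •
      (((Real.sigmoid (2 * π * w) : ℝ) : ℂ) ^ (1 - s - 1) *
        (1 - ((Real.sigmoid (2 * π * w) : ℝ) : ℂ)) ^ (s + 1 - 1)) =
      (π / 2 : ℂ) * ((1 / Real.cosh (π * w)) ^ 2 : ℝ) • Complex.exp (-(Complex.I * w * t)) := by
    intro w
    rw [abs_of_nonneg (by positivity), Complex.real_smul, Complex.real_smul, ← mul_assoc (π / 2 : ℂ)]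
    congr 1
    · push_cast; rfl
    · have e : (1 - ((Real.sigmoid (2 * π * w) : ℝ) : ℂ)) =
          ((Real.sigmoid (2 * π * w) : ℝ) : ℂ) * ((Real.exp (-(2 * π * w)) : ℝ) : ℂ) := by
        rw [← Complex.ofReal_mul, Real.sigmoid_mul_rexp_neg, Real.sigmoid_neg]; push_cast; ring
      have hsp := Real.sigmoid_pos (2 * π * w)
      rw [e, Complex.mul_cpow_ofReal_nonneg hsp.le (Real.exp_pos _).le, ← mul_assoc,
        ← Complex.cpow_add _ _ (by exact_mod_cast hsp.ne'),
        show 1 - s - 1 + (s + 1 - 1) = 0 by ring, Complex.cpow_zero, one_mul, add_sub_cancel_right,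
        Complex.cpow_def_of_ne_zero (by exact_mod_cast (Real.exp_pos _).ne'),
        ← Complex.ofReal_log (Real.exp_pos _).le, Real.log_exp, hs]
      congr 1
      push_cast
      field_simp
  simp_rw [key] at hB
  rw [← hB]
  have hsin : Complex.sin (π * s) = Complex.I * Complex.sinh (t / 2) := by
    rw [mul_comm Complex.I, ← Complex.sin_mul_I]
    congr 1
    rw [hs]; field_simp
  have e1 : Complex.exp (-(t:ℂ)) = Complex.exp (-(t / 2)) ^ 2 := by
    rw [← Complex.exp_nat_mul]; congr 1; push_cast; ring
  have e2 : Complex.exp ((t:ℂ) / 2) = (Complex.exp (-(t / 2)))⁻¹ := by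
    rw [← Complex.exp_neg, neg_neg]
  have hne : (1 : ℂ) - Complex.exp (-(t / 2)) ^ 2 ≠ 0 := by
    rw [← e1, ← Complex.ofReal_neg, ← Complex.ofReal_exp, sub_ne_zero]
    have : Real.exp (-t) < 1 := by rw [Real.exp_lt_one_iff]; linarith
    exact_mod_cast this.ne'
  have hE := Complex.exp_ne_zero (-((t:ℂ) / 2))
  rw [hsin, Complex.sinh, e1, e2, hs]
  set E := Complex.exp (-((t:ℂ) / 2))
  have h3 : E⁻¹ - E = (1 - E ^ 2) / E := by field_simp
  rw [h3]
  have := Complex.I_ne_zero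
  field_simp

lemma laplace_integrable (k : ℕ) (r : ℝ) (hr : 0 < r) :
    IntegrableOn (fun t : ℝ => t ^ k * Real.exp (-(r * t))) (Ioi 0) := by
  have h := integrableOn_rpow_mul_exp_neg_mul_rpow (p := 1) (s := k) (b := r)
    (by have : (0:ℝ) ≤ k := by positivity
        linarith) one_pos hr
  simpa using h

lemma laplace_integrable' (k : ℕ) (z : ℂ) (hz : 0 < z.re) :
    IntegrableOn (fun t : ℝ => (t : ℂ) ^ k * Complex.exp (-(z * t))) (Ioi 0) := by
  refine Integrable.mono' (laplace_integrable k z.re hz) (by fun_prop) ?_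
  filter_upwards [ae_restrict_mem measurableSet_Ioi] with t ht
  have ht := mem_Ioi.1 ht
  rw [norm_mul, norm_pow, Complex.norm_real, Real.norm_of_nonneg ht.le, Complex.norm_exp]
  simp

lemma laplace (k : ℕ) (z : ℂ) (hz : 0 < z.re) :
    ∫ t : ℝ in Ioi 0, (t : ℂ) ^ k * Complex.exp (-(z * t)) = k.factorial / z ^ (k + 1) := by
  have hz0 : z ≠ 0 := by rintro rfl; simp at hz
  induction k with
  | zero =>
    have := integral_exp_mul_complex_Ioi (a := -z) (by simpa using hz) 0
    simp at this
    simp [this]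
  | succ k ih =>
    have hd : ∀ t : ℝ, HasDerivAt (fun t : ℝ => (t : ℂ) ^ (k + 1) * Complex.exp (-(z * t)))
        ((k + 1 : ℂ) * ((t : ℂ) ^ k * Complex.exp (-(z * t))) -
          z * ((t : ℂ) ^ (k + 1) * Complex.exp (-(z * t)))) t := by
      intro t
      have h1 : HasDerivAt (fun t : ℂ => t ^ (k + 1) * Complex.exp (-(z * t)))
        ((k + 1 : ℂ) * ((t : ℂ) ^ k * Complex.exp (-(z * t))) -
          z * ((t : ℂ) ^ (k + 1) * Complex.exp (-(z * t)))) (t : ℂ) := by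
        have ha := hasDerivAt_pow (k + 1) (t : ℂ)
        have hb := (((hasDerivAt_id (t : ℂ)).const_mul z).neg).cexp
        refine (ha.mul hb).congr_deriv ?_
        simp
        ring
      exact h1.comp_ofReal
    have hi1 := (laplace_integrable' k z hz).const_mul (k + 1 : ℂ)
    have hi2 := (laplace_integrable' (k + 1) z hz).const_mul z
    have hlim : Tendsto (fun t : ℝ => (t : ℂ) ^ (k + 1) * Complex.exp (-(z * t))) atTop (𝓝 0) := by
      rw [tendsto_zero_iff_norm_tendsto_zero]
      have := tendsto_rpow_mul_exp_neg_mul_atTop_nhds_zero (k + 1 : ℕ) z.re hz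
      refine this.congr' ?_
      filter_upwards [eventually_gt_atTop 0] with t ht
      rw [norm_mul, norm_pow, Complex.norm_real, Real.norm_of_nonneg ht.le, Complex.norm_exp,
        Real.rpow_natCast]
      simp
    have h := integral_Ioi_of_hasDerivAt_of_tendsto' (a := (0:ℝ)) (fun t _ => hd t) (hi1.sub hi2) hlim
    rw [integral_sub hi1 hi2, integral_const_mul, integral_const_mul, ih] at h
    simp only [Complex.ofReal_zero, ne_eq, Nat.add_eq_zero_iff, one_ne_zero, and_false, not_false_eq_true, zero_pow, zero_mul, sub_zero] at h
    have h2 := (sub_eq_zero.1 h).symm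
    rw [← mul_right_inj' hz0, h2, Nat.factorial_succ]
    push_cast
    field_simp
    ring

lemma moment (k : ℕ) (x : ℝ) (hx : 1 / 2 < x) :
    (π / 2 : ℂ) * ∫ w : ℝ,
          ((1 / Real.cosh (π * w)) ^ 2 : ℝ) • (((x : ℂ) + Complex.I * w - 1 / 2) ^ (-((k + 1 : ℕ) : ℤ))) =
     (1 / (k.factorial : ℂ)) * ∫ t : ℝ in Ioi 0, (t : ℂ) ^ (k + 1) * 
        (Complex.exp (-(x * t)) / (1 - Complex.exp (-t))) := by
  have hz : ∀ w : ℝ, 0 < ((x : ℂ) + Complex.I * w - 1 / 2).re := by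
    intro w; simp; linarith
  have e1 : ∀ w : ℝ, ((1 / Real.cosh (π * w)) ^ 2 : ℝ) • (((x : ℂ) + Complex.I * w - 1 / 2) ^ (-((k + 1 : ℕ) : ℤ))) =
      (1 / (k.factorial : ℂ)) * ∫ t : ℝ in Ioi 0, (((1 / Real.cosh (π * w)) ^ 2 : ℝ) : ℂ) * ((t : ℂ) ^ k * 
        Complex.exp (-(((x : ℂ) + Complex.I * w - 1 / 2) * t))) := by
    intro w
    have hf : (k.factorial : ℂ) ≠ 0 := by exact_mod_cast k.factorial_ne_zero
    rw [integral_const_mul, laplace k _ (hz w), zpow_neg, zpow_natCast, Complex.real_smul]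
    field_simp
  simp_rw [e1]
  rw [integral_const_mul, integral_integral_swap]
  · rw [mul_left_comm, ← integral_const_mul]
    congr 1
    refine setIntegral_congr_fun measurableSet_Ioi fun t ht => ?_
    have hF := fourier_sech t ht
    have e2 : ∀ w : ℝ, (((1 / Real.cosh (π * w)) ^ 2 : ℝ) : ℂ) * ((t : ℂ) ^ k * 
        Complex.exp (-(((x : ℂ) + Complex.I * w - 1 / 2) * t))) =
        ((t : ℂ) ^ k * Complex.exp (-((x - 1 / 2) * t))) * 
        (((1 / Real.cosh (π * w)) ^ 2 : ℝ) • Complex.exp (-(Complex.I * w * t))) := by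
      intro w
      rw [Complex.real_smul, show -(((x : ℂ) + Complex.I * w - 1 / 2) * t) =
        (-((x - 1 / 2) * t)) + (-(Complex.I * w * t)) by ring, Complex.exp_add]
      ring
    simp_rw [e2]
    rw [integral_const_mul, mul_left_comm, hF, show -((x:ℂ) * t) = -((x - 1 / 2) * t) + (-(t/2)) by ring,
      Complex.exp_add]
    ring
  · have hp := Integrable.mul_prod (sech_integrable)
      (laplace_integrable k (x - 1 / 2) (by linarith))
    refine hp.mono' ?_ ?_
    · refine AEStronglyMeasurable.mul ?_ ?_
      · have hc : Continuous (fun p : ℝ × ℝ => (((1 / Real.cosh (π * p.1)) ^ 2 : ℝ) : ℂ)) := by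
          refine Complex.continuous_ofReal.comp (Continuous.pow (Continuous.div continuous_const ?_ ?_) 2)
          · fun_prop
          · intro p; exact (Real.cosh_pos _).ne'
        exact hc.aestronglyMeasurable
      · have hc : Continuous (fun p : ℝ × ℝ => ((p.2 : ℂ) ^ k * 
          Complex.exp (-(((x : ℂ) + Complex.I * p.1 - 1 / 2) * p.2)))) := by fun_prop
        exact hc.aestronglyMeasurable
    · have hm : ∀ᵐ p ∂((volume : Measure ℝ).prod (volume.restrict (Ioi (0:ℝ)))), p.2 ∈ Ioi (0:ℝ) :=
        Measure.quasiMeasurePreserving_snd.ae (ae_restrict_mem measurableSet_Ioi)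
      filter_upwards [hm] with p hp
      have ht := mem_Ioi.1 hp
      simp only [Function.uncurry]
      rw [norm_mul, norm_mul, norm_pow, Complex.norm_real, Complex.norm_real, Real.norm_of_nonneg ht.le, Complex.norm_exp,
        Real.norm_of_nonneg (by positivity)]
      simp

lemma moment_sum (k : ℕ) (x : ℝ) (hx : 1 / 2 < x) (hsum : Summable (fun n : ℕ => 1 / (x + n) ^ (k + 2))):
    (π / 2 : ℂ) * ∫ w : ℝ,
          ((1 / Real.cosh (π * w)) ^ 2 : ℝ) • (((x : ℂ) + Complex.I * w - 1 / 2) ^ (-((k + 1 : ℕ) : ℤ))) =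
     (((k + 1 : ℕ) * ∑' n : ℕ, 1 / (x + n) ^ (k + 2) : ℝ) : ℂ) := by
  rw [moment k x hx]
  have hm := hasSum_mellin (a := fun _ : ℕ => (1 : ℂ)) (p := fun n : ℕ => x + n) (s := ((k + 1 : ℕ) : ℂ) + 1)
    (F := fun t : ℝ => Complex.exp (-(x * t)) / (1 - Complex.exp (-t)))
    (fun n => Or.inr (by positivity)) (by simp; positivity) ?_ ?_
  · have e : mellin (fun t : ℝ => Complex.exp (-(x * t)) / (1 - Complex.exp (-t))) (((k + 1 : ℕ) : ℂ) + 1) =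
      ∫ t : ℝ in Ioi 0, (t : ℂ) ^ (k + 1) * 
        (Complex.exp (-(x * t)) / (1 - Complex.exp (-t))) := by
      rw [mellin]
      simp only [add_sub_cancel_right, Complex.cpow_natCast, smul_eq_mul]
    rw [← e, ← hm.tsum_eq, Complex.Gamma_nat_eq_factorial, ← tsum_mul_left, Complex.ofReal_mul,
      Complex.ofReal_tsum, ← tsum_mul_left]
    congr 1
    ext n
    have hf : (k.factorial : ℂ) ≠ 0 := by exact_mod_cast k.factorial_ne_zero
    rw [show ((k + 1 : ℕ) : ℂ) + 1 = ((k + 2 : ℕ) : ℂ) by push_cast; ring, Complex.cpow_natCast,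
      Nat.factorial_succ]
    push_cast
    field_simp
  · intro t ht
    have ht := mem_Ioi.1 ht
    have hlt : ‖Complex.exp (-t)‖ < 1 := by
      rw [Complex.norm_exp, Real.exp_lt_one_iff]; simpa using ht
    have := (hasSum_geometric_of_norm_lt_one hlt).mul_left (Complex.exp (-(x * t)))
    rw [div_eq_mul_inv]
    refine this.congr_fun ?_ |> id
    intro n
    rw [← Complex.exp_nat_mul, ← Complex.exp_add]
    push_cast
    rw [one_mul]
    congr 1
    ring
  · refine hsum.congr fun n => ?_
    have : ((((k + 1 : ℕ) : ℂ) + 1).re) = ((k + 2 : ℕ) : ℝ) := by simp; ring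
    rw [this, Real.rpow_natCast]
    simp

end Aux

/-- For `m ≥ 2` and `x > 1/2`,
`(π/2) ∫_ℝ sech²(πw) (x+iw-1/2)^{-m} dw = (-1)^{m-1} ψ^{(m)}(x)/(m-1)!`;
in particular at `x = 1` this equals `m·ζ(m+1)`. -/
theorem sech_negative_moment (m : ℕ) (hm : 2 ≤ m) :
    (∀ x : ℝ, 1 / 2 < x →
      (π / 2 : ℂ) * ∫ w : ℝ,
          ((1 / Real.cosh (π * w)) ^ 2 : ℝ) • (((x : ℂ) + Complex.I * w - 1 / 2) ^ (-(m : ℤ))) =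
        (((-1 : ℝ) ^ (m - 1) * polygamma m x / Nat.factorial (m - 1) : ℝ) : ℂ)) ∧
    (π / 2 : ℂ) * ∫ w : ℝ,
        ((1 / Real.cosh (π * w)) ^ 2 : ℝ) • (((1 : ℂ) + Complex.I * w - 1 / 2) ^ (-(m : ℤ))) =
      (m : ℂ) * riemannZeta (m + 1) := by
  obtain ⟨k, rfl⟩ : ∃ k, m = k + 1 := ⟨m - 1, by omega⟩
  refine ⟨fun x hx => ?_, ?_⟩
  · rw [polygamma_eq (k + 1) (by omega) x (by linarith)]
    exact moment_sum k x hx (aux_summable x (by linarith) (k + 2) (by omega))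
  · have h := moment_sum k 1 (by norm_num) (aux_summable 1 one_pos (k + 2) (by omega))
    rw [Complex.ofReal_one] at h
    rw [h, show (((k + 1 : ℕ) : ℂ) + 1) = ((k + 2 : ℕ) : ℂ) by push_cast; ring,
      zeta_eq_tsum_one_div_nat_add_one_cpow (by simp; linarith [(Nat.cast_nonneg k : (0:ℝ) ≤ k)])]
    rw [Complex.ofReal_mul, Complex.ofReal_tsum]
    congr 1
    refine tsum_congr fun n => ?_
    rw [Complex.cpow_natCast]
    push_cast
    rw [add_comm]
end

section
/- For real x > 1/2, (π/2) ∫_{-∞}^{∞} sech²(πw) log(x + iw - 1/2) dw = ψ(x), where the left side is real (the imaginary parts cancel by symmetry). -/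
open MeasureTheory Real

noncomputable def sg (w : ℝ) : ℝ := (1 / Real.cosh (π * w)) ^ 2

lemma sg_cont : Continuous sg := by
  unfold sg
  exact (continuous_const.div (by fun_prop) (fun w => (Real.cosh_pos _).ne')).pow 2

lemma sg_nonneg (w : ℝ) : 0 ≤ sg w := sq_nonneg _

lemma cosh_lower (w : ℝ) : 1 + w ^ 2 ≤ Real.cosh (π * w) := by
  have h1 : Real.cosh (π * w) = 1 + 2 * Real.sinh (π * w / 2) ^ 2 := by
    have := Real.cosh_two_mul (π * w / 2)
    have h2 := Real.cosh_sq (π * w / 2)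
    rw [show 2 * (π * w / 2) = π * w by ring] at this
    linarith
  have h2 : (π * w / 2) ^ 2 ≤ Real.sinh (π * w / 2) ^ 2 := by
    rw [sq_le_sq, Real.abs_sinh]
    exact Real.self_le_sinh_iff.2 (abs_nonneg _)
  have h3 : (3:ℝ) ≤ π := Real.pi_gt_three.le
  rw [h1]
  nlinarith [sq_nonneg w, mul_le_mul_of_nonneg_right (show (9:ℝ) ≤ π^2 by nlinarith) (sq_nonneg w)]

lemma sg_bound (w : ℝ) : (1 + |w|) * sg w ≤ 2 * (1 + w ^ 2)⁻¹ := by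
  have h := cosh_lower w
  have hp : 0 < 1 + w ^ 2 := by positivity
  have h2 : sg w ≤ (1 / (1 + w ^ 2)) ^ 2 := by
    unfold sg
    gcongr
  have h3 : 1 + |w| ≤ 2 * (1 + w ^ 2) := by
    nlinarith [sq_abs w, sq_nonneg (|w| - 1)]
  calc (1 + |w|) * sg w ≤ (2 * (1 + w ^ 2)) * (1 / (1 + w ^ 2)) ^ 2 := by
        apply mul_le_mul h3 h2 (sg_nonneg w) (by positivity)
    _ = _ := by field_simp

lemma sg_int1 : Integrable (fun w => (1 + |w|) * sg w) := by
  refine (integrable_inv_one_add_sq.const_mul 2).mono' ?_ ?_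
  · exact (by have := sg_cont; fun_prop : Continuous (fun w => (1 + |w|) * sg w)).aestronglyMeasurable
  · filter_upwards with w
    rw [Real.norm_of_nonneg (mul_nonneg (by positivity) (sg_nonneg w))]
    exact sg_bound w

lemma sg_int_abs : Integrable (fun w => |w| * sg w) := by
  refine sg_int1.mono' ?_ ?_
  · exact (by have := sg_cont; fun_prop : Continuous (fun w => |w| * sg w)).aestronglyMeasurable
  · filter_upwards with w
    rw [Real.norm_of_nonneg (mul_nonneg (by positivity) (sg_nonneg w))]
    nlinarith [sg_nonneg w]

lemma sg_int : Integrable sg := by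
  refine sg_int1.mono' sg_cont.aestronglyMeasurable ?_
  · filter_upwards with w
    rw [Real.norm_of_nonneg (sg_nonneg w)]
    nlinarith [sg_nonneg w, mul_nonneg (abs_nonneg w) (sg_nonneg w)]

lemma sigmoid_sg (w : ℝ) :
    Real.sigmoid (2 * π * w) * (1 - Real.sigmoid (2 * π * w)) * (2 * π) = π / 2 * sg w := by
  rw [← Real.sigmoid_neg, Real.sigmoid_def, Real.sigmoid_def, sg, Real.cosh_eq, neg_neg,
    show 2 * π * w = π * w + π * w by ring, neg_add, Real.exp_add, Real.exp_add, Real.exp_neg]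
  have := Real.exp_pos (π * w)
  field_simp
  ring

lemma beta_sg (a : ℂ) : (π / 2 : ℂ) * ∫ w : ℝ, sg w • Complex.exp (-(a * (2 * π * w))) =
    Complex.betaIntegral (1 - a) (1 + a) := by
  have key := integral_image_eq_integral_abs_deriv_smul (s := Set.univ)
    (f := fun w => Real.sigmoid (2 * π * w))
    (f' := fun w => Real.sigmoid (2 * π * w) * (1 - Real.sigmoid (2 * π * w)) * (2 * π))
    MeasurableSet.univ
    (fun w _ => (by
      have h1 : HasDerivAt (fun w : ℝ => 2 * π * w) (2 * π) w := by
        simpa using (hasDerivAt_id w).const_mul (2 * π)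
      exact ((Real.hasDerivAt_sigmoid (2 * π * w)).comp w h1).hasDerivWithinAt))
    (fun x _ y _ h => by
      have := Real.sigmoid_injective h
      have hp : (2 * π) ≠ 0 := by positivity
      exact mul_left_cancel₀ hp this)
    (fun u : ℝ => (u : ℂ) ^ ((1 - a) - 1) * (1 - (u : ℂ)) ^ ((1 + a) - 1))
  have him : (fun w => Real.sigmoid (2 * π * w)) '' Set.univ = Set.Ioo 0 1 := by
    rw [← Real.range_sigmoid, Set.image_univ]
    ext y
    constructor
    · rintro ⟨w, rfl⟩; exact ⟨_, rfl⟩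
    · rintro ⟨w, rfl⟩
      refine ⟨w / (2 * π), ?_⟩
      have hp : (2 * π) ≠ 0 := by positivity
      simp only
      congr 1
      field_simp
  rw [him] at key
  rw [Complex.betaIntegral, intervalIntegral.integral_of_le zero_le_one,
    integral_Ioc_eq_integral_Ioo, key, setIntegral_univ, ← integral_const_mul]
  congr 1
  ext w
  rw [sigmoid_sg, abs_of_nonneg (mul_nonneg (by positivity) (sg_nonneg w))]
  have hpos := Real.sigmoid_pos (2 * π * w)
  have hneg := Real.sigmoid_pos (-(2 * π * w))
  have e1 : (1 - (Real.sigmoid (2 * π * w) : ℂ)) = ((Real.sigmoid (-(2 * π * w)) : ℝ) : ℂ) := by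
    rw [Real.sigmoid_neg]; push_cast; rfl
  have e2 : Real.log (Real.sigmoid (-(2 * π * w))) = Real.log (Real.sigmoid (2 * π * w)) - 2 * π * w := by
    rw [← Real.sigmoid_mul_rexp_neg, Real.log_mul hpos.ne' (Real.exp_pos _).ne', Real.log_exp]; ring
  rw [e1, Complex.cpow_def_of_ne_zero (by exact_mod_cast hpos.ne'),
    Complex.cpow_def_of_ne_zero (by exact_mod_cast hneg.ne'), ← Complex.exp_add,
    ← Complex.ofReal_log hpos.le, ← Complex.ofReal_log hneg.le, e2, Complex.real_smul, Complex.real_smul]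
  push_cast
  rw [← mul_assoc]
  congr 2
  ring

lemma sg_total : (π / 2 : ℂ) * ∫ w : ℝ, ((sg w : ℝ) : ℂ) = 1 := by
  have := beta_sg 0
  simp only [zero_mul, neg_zero, Complex.exp_zero, sub_zero, add_zero] at this
  rw [Complex.betaIntegral_eval_one_right (by simp)] at this
  simpa using this

lemma sg_char (t : ℝ) (ht : 0 < t) :
    (π / 2 : ℂ) * ∫ w : ℝ, sg w • Complex.exp (-(Complex.I * t * w)) =
      t * Complex.exp (-(t/2)) / (1 - Complex.exp (-t)) := by
  have hpi : (π : ℂ) ≠ 0 := by exact_mod_cast Real.pi_ne_zero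
  have htc : (t : ℂ) ≠ 0 := by exact_mod_cast ht.ne'
  set a : ℂ := Complex.I * t / (2 * π) with ha
  have ha0 : a ≠ 0 := by
    rw [ha]; exact div_ne_zero (mul_ne_zero Complex.I_ne_zero htc) (mul_ne_zero two_ne_zero hpi)
  have hre : a.re = 0 := by
    rw [ha, show Complex.I * t / (2 * π) = ((t / (2 * π) : ℝ) : ℂ) * Complex.I by push_cast; ring,
      Complex.re_ofReal_mul, Complex.I_re, mul_zero]
  have hG2 : Complex.Gamma 2 = 1 := by
    have := Complex.Gamma_nat_eq_factorial 1
    rw [Nat.cast_one, one_add_one_eq_two] at this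
    rw [this]; simp
  have h := beta_sg a
  have h2 := Complex.Gamma_mul_Gamma_eq_betaIntegral (s := 1 - a) (t := 1 + a) (by simp [hre]) (by simp [hre])
  rw [show (1 - a) + (1 + a) = 2 by ring, hG2, one_mul, add_comm 1 a, Complex.Gamma_add_one a ha0] at h2
  have h3 := Complex.Gamma_mul_Gamma_one_sub a
  have h4 : (fun w : ℝ => sg w • Complex.exp (-(Complex.I * t * w))) =
      fun w : ℝ => sg w • Complex.exp (-(a * (2 * π * w))) := by
    ext w
    congr 3
    rw [ha]; field_simp
  rw [h4, h, add_comm 1 a, ← h2, show Complex.Gamma (1 - a) * (a * Complex.Gamma a) = a * (Complex.Gamma a * Complex.Gamma (1 - a)) by ring, h3]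
  have h5 : (π:ℂ) * a = (t / 2 : ℂ) * Complex.I := by rw [ha]; field_simp
  rw [h5, Complex.sin_mul_I, Complex.sinh, ha]
  have h6 : Complex.exp (-t) = Complex.exp (-(t/2)) * Complex.exp (-(t/2)) := by
    rw [← Complex.exp_add]; congr 1; ring
  have h7 : Complex.exp (t/2) * Complex.exp (-(t/2)) = 1 := by
    rw [← Complex.exp_add]; simp
  have h8 : 1 - Complex.exp (-t) ≠ 0 := by
    rw [← Complex.ofReal_neg, ← Complex.ofReal_exp, ← Complex.ofReal_one, ← Complex.ofReal_sub]
    have : Real.exp (-t) < 1 := Real.exp_lt_one_iff.2 (by linarith)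
    exact_mod_cast (sub_pos.2 this).ne'
  have h9 : Complex.exp (-(t/2)) * (Complex.exp (t/2) - Complex.exp (-(t/2))) = 1 - Complex.exp (-t) := by
    rw [h6]; linear_combination h7
  have h10 : Complex.exp (t/2) - Complex.exp (-(t/2)) ≠ 0 := by
    intro h; rw [h, mul_zero] at h9; exact h8 h9.symm
  have hI := Complex.I_ne_zero
  rw [← h9]
  have := Complex.exp_ne_zero (-(t/2:ℂ))
  field_simp

lemma log_dev (y w : ℝ) (hy : 0 < y) :
    ‖Complex.log (y + Complex.I * w) - Complex.log y‖ ≤ |w| / y := by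
  have hs : ∀ z ∈ {z : ℂ | y ≤ z.re}, HasDerivWithinAt Complex.log z⁻¹ {z : ℂ | y ≤ z.re} z := by
    intro z hz
    exact (Complex.hasDerivAt_log (Or.inl (lt_of_lt_of_le hy hz))).hasDerivWithinAt
  have hb : ∀ z ∈ {z : ℂ | y ≤ z.re}, ‖z⁻¹‖ ≤ 1 / y := by
    intro z hz
    rw [norm_inv, one_div]
    have h1 : y ≤ ‖z‖ := le_trans hz (Complex.re_le_norm z)
    gcongr
  have := (convex_halfSpace_re_ge y).norm_image_sub_le_of_norm_hasDerivWithin_le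
    hs hb (x := (y:ℂ)) (y := (y:ℂ) + Complex.I * w) (by simp) (by simp)
  calc _ ≤ _ := this
    _ = |w| / y := by simp; ring

lemma log_cont (y : ℝ) (hy : 0 < y) : Continuous (fun w : ℝ => Complex.log (y + Complex.I * w)) := by
  refine Continuous.clog (by fun_prop) (fun w => ?_)
  left; simpa using hy

lemma sg_log_int (y : ℝ) (hy : 0 < y) :
    Integrable (fun w : ℝ => sg w • (Complex.log (y + Complex.I * w) - Complex.log y)) := by
  refine (sg_int_abs.mul_const (1 / y)).mono' ?_ ?_
  · have := log_cont y hy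
    have := sg_cont
    exact (by fun_prop : Continuous (fun w : ℝ => sg w • (Complex.log (y + Complex.I * w) - Complex.log y))).aestronglyMeasurable
  · filter_upwards with w
    rw [norm_smul, Real.norm_of_nonneg (sg_nonneg w)]
    calc _ ≤ sg w * (|w| / y) := mul_le_mul_of_nonneg_left (log_dev y w hy) (sg_nonneg w)
      _ = _ := by ring

noncomputable def LF (y : ℝ) : ℂ := (π / 2 : ℂ) * ∫ w : ℝ, sg w • Complex.log (y + Complex.I * w)

lemma sg_log_int' (y : ℝ) (hy : 0 < y) :
    Integrable (fun w : ℝ => sg w • (Complex.log (y + Complex.I * w))) := by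
  have := (sg_log_int y hy).add (sg_int.smul_const (Complex.log y))
  refine this.congr ?_
  filter_upwards with w
  simp [mul_sub]

lemma LF_sub_log (y : ℝ) (hy : 0 < y) :
    LF y - Real.log y = (π / 2 : ℂ) * ∫ w : ℝ, sg w • (Complex.log (y + Complex.I * w) - Complex.log y) := by
  simp_rw [smul_sub]
  rw [integral_sub (sg_log_int' y hy) (sg_int.smul_const (Complex.log y)), mul_sub, ← LF]
  congr 1
  simp_rw [Complex.real_smul]
  rw [integral_mul_const, ← mul_assoc, sg_total, one_mul, Complex.ofReal_log hy.le]

lemma LF_dev (y : ℝ) (hy : 0 < y) : ‖LF y - Real.log y‖ ≤ (π / 2 * ∫ w : ℝ, |w| * sg w) / y := by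
  rw [LF_sub_log y hy, norm_mul]
  have h1 : ‖(π / 2 : ℂ)‖ = π / 2 := by
    rw [show (π / 2 : ℂ) = ((π / 2 : ℝ) : ℂ) by push_cast; rfl, Complex.norm_real,
      Real.norm_of_nonneg (by positivity)]
  rw [h1, mul_div_assoc]
  gcongr
  rw [div_eq_mul_one_div, ← integral_mul_const]
  refine norm_integral_le_of_norm_le (sg_int_abs.mul_const _) ?_
  filter_upwards with w
  rw [norm_smul, Real.norm_of_nonneg (sg_nonneg w)]
  calc _ ≤ sg w * (|w| / y) := mul_le_mul_of_nonneg_left (log_dev y w hy) (sg_nonneg w)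
      _ = _ := by ring

lemma frullani (z : ℂ) (hz : 0 < z.re) :
    Complex.log (z + 1) - Complex.log z =
      ∫ t in Set.Ioi (0:ℝ), Complex.exp (-(t * z)) * ((1 - Complex.exp (-t)) / t) := by
  have hpos : ∀ s ∈ Set.Icc (0:ℝ) 1, 0 < (z + s).re := by
    intro s hs; simp; linarith [hs.1]
  have h1 : ∫ s in (0:ℝ)..1, (z + s)⁻¹ = Complex.log (z + 1) - Complex.log z := by
    have := intervalIntegral.integral_eq_sub_of_hasDerivAt (a := 0) (b := 1)
      (f := fun s : ℝ => Complex.log (z + s)) (f' := fun s : ℝ => (z + s)⁻¹) ?_ ?_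
    · rw [this]; simp
    · intro s hs
      rw [Set.uIcc_of_le zero_le_one] at hs
      have hd : HasDerivAt (fun s : ℝ => z + (s:ℂ)) 1 s :=
        (Complex.ofRealCLM.hasDerivAt (x := s)).const_add z
      have := hd.clog_real (Or.inl (hpos s hs))
      simpa using this
    · apply ContinuousOn.intervalIntegrable
      rw [Set.uIcc_of_le zero_le_one]
      refine ContinuousOn.inv₀ (by fun_prop) ?_
      intro s hs h
      have := hpos s hs
      rw [h] at this; simp at this
  have h2 : ∀ s ∈ Set.Ioc (0:ℝ) 1, ∫ t in Set.Ioi (0:ℝ), Complex.exp (-(t * (z + s))) = (z + s)⁻¹ := by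
    intro s hs
    have h := integral_exp_mul_complex_Ioi (a := -(z + s)) (by
      have := hpos s ⟨hs.1.le, hs.2⟩
      rw [Complex.neg_re]; linarith) 0
    simp only [Complex.ofReal_zero, mul_zero, Complex.exp_zero, neg_div_neg_eq, one_div] at h
    rw [← h]
    congr 1
    ext t; congr 1; ring
  rw [← h1, intervalIntegral.integral_of_le zero_le_one,
    ← setIntegral_congr_fun measurableSet_Ioc h2, integral_integral_swap]
  · refine setIntegral_congr_fun measurableSet_Ioi (fun t ht => ?_)
    have htc : (t:ℂ) ≠ 0 := by exact_mod_cast (ne_of_gt ht)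
    rw [← intervalIntegral.integral_of_le zero_le_one]
    have e : ∀ s : ℝ, Complex.exp (-(t * (z + s))) = Complex.exp (-(t * z)) * Complex.exp ((-t) * s) := by
      intro s; rw [← Complex.exp_add]; congr 1; ring
    simp_rw [e]
    rw [intervalIntegral.integral_const_mul, integral_exp_mul_complex (neg_ne_zero.2 htc)]
    congr 1
    simp
    field_simp
    ring
  · have hi : Integrable (fun p : ℝ × ℝ => (1:ℝ) * Real.exp (-z.re * p.2))
        ((volume.restrict (Set.Ioc (0:ℝ) 1)).prod (volume.restrict (Set.Ioi (0:ℝ)))) := by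
      refine Integrable.mul_prod (f := fun _ : ℝ => (1:ℝ)) (g := fun t : ℝ => Real.exp (-z.re * t)) (integrable_const _) ?_
      exact integrableOn_exp_mul_Ioi (by linarith) 0
    refine hi.mono' ?_ ?_
    · exact (by fun_prop : Continuous (Function.uncurry fun (s t : ℝ) => Complex.exp (-(t * (z + s))))).aestronglyMeasurable
    · rw [Measure.prod_restrict]
      filter_upwards [ae_restrict_mem (measurableSet_Ioc.prod measurableSet_Ioi)] with p hp
      obtain ⟨hp1, hp2⟩ := hp
      simp only [Function.uncurry, one_mul, Complex.norm_exp, Real.exp_le_exp]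
      simp
      have : 0 ≤ p.2 * p.1 := mul_nonneg (le_of_lt hp2) hp1.1.le
      nlinarith

lemma LF_add_one (y : ℝ) (hy : 0 < y) : LF (y + 1) - LF y = ((y:ℂ) + 1 / 2)⁻¹ := by
  have hy1 : 0 < y + 1 := by linarith
  have h0 : ∀ w : ℝ, sg w • Complex.log (((y + 1 : ℝ):ℂ) + Complex.I * w) - sg w • Complex.log (y + Complex.I * w)
     = ∫ t in Set.Ioi (0:ℝ), sg w • (Complex.exp (-(t * (y + Complex.I * w))) * ((1 - Complex.exp (-t)) / t)) := by
    intro w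
    rw [integral_smul, ← frullani _ (by simpa using hy), ← smul_sub]
    congr 3
    push_cast; ring
  rw [LF, LF, ← mul_sub, ← integral_sub (sg_log_int' _ hy1) (sg_log_int' y hy)]
  simp_rw [h0]
  rw [integral_integral_swap, ← integral_const_mul]
  · have h2 : ∀ t ∈ Set.Ioi (0:ℝ), (π / 2 : ℂ) * ∫ w : ℝ, sg w • (Complex.exp (-(t * (y + Complex.I * w))) * ((1 - Complex.exp (-t)) / t)) = Complex.exp (-(y + 1 / 2) * t) := by
      intro t ht
      have ht : 0 < t := ht
      have htc : (t:ℂ) ≠ 0 := by exact_mod_cast (ne_of_gt ht)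
      have h8 : 1 - Complex.exp (-t) ≠ 0 := by
        rw [← Complex.ofReal_neg, ← Complex.ofReal_exp, ← Complex.ofReal_one, ← Complex.ofReal_sub]
        have : Real.exp (-t) < 1 := Real.exp_lt_one_iff.2 (by linarith)
        exact_mod_cast (sub_pos.2 this).ne'
      have e : ∀ w : ℝ, sg w • (Complex.exp (-(t * (y + Complex.I * w))) * ((1 - Complex.exp (-t)) / t)) =
          (sg w • Complex.exp (-(Complex.I * t * w))) * (Complex.exp (-(t * y)) * ((1 - Complex.exp (-t)) / t)) := by
        intro w
        rw [show -((t:ℂ) * (y + Complex.I * w)) = -(Complex.I * t * w) + -(t * y) by ring, Complex.exp_add,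
          Complex.real_smul, Complex.real_smul]
        ring
      simp_rw [e]
      rw [integral_mul_const, ← mul_assoc, sg_char t ht,
        show (-((y:ℂ) + 1 / 2) * t) = -(t / 2) + -(t * y) by ring, Complex.exp_add]
      field_simp
    rw [setIntegral_congr_fun measurableSet_Ioi h2]
    have h := integral_exp_mul_complex_Ioi (a := -((y:ℂ) + 1 / 2)) (by simp; linarith) 0
    simp only [Complex.ofReal_zero, mul_zero, Complex.exp_zero, neg_div_neg_eq, one_div] at h
    simpa using h
  · have hi : Integrable (fun p : ℝ × ℝ => sg p.1 * Real.exp (-y * p.2))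
        (volume.prod (volume.restrict (Set.Ioi (0:ℝ)))) :=
      Integrable.mul_prod sg_int (integrableOn_exp_mul_Ioi (by linarith) 0)
    refine hi.mono' ?_ ?_
    · have := sg_cont.measurable
      exact (by unfold Function.uncurry; fun_prop : Measurable (Function.uncurry fun (w t : ℝ) => sg w • (Complex.exp (-(t * (y + Complex.I * w))) * ((1 - Complex.exp (-t)) / t)))).aestronglyMeasurable
    · rw [← Measure.restrict_univ (μ := (volume : Measure ℝ)), Measure.restrict_univ, ← Measure.restrict_univ (μ := (volume : Measure ℝ)), Measure.prod_restrict]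
      filter_upwards [ae_restrict_mem (MeasurableSet.univ.prod measurableSet_Ioi)] with p hp
      have ht : 0 < p.2 := hp.2
      simp only [Function.uncurry]
      rw [norm_smul, Real.norm_of_nonneg (sg_nonneg _), norm_mul, Complex.norm_exp]
      have e1 : ‖(1 - Complex.exp (-p.2)) / (p.2:ℂ)‖ ≤ 1 := by
        rw [show (1 - Complex.exp (-p.2)) / (p.2:ℂ) = (((1 - Real.exp (-p.2)) / p.2 : ℝ) : ℂ) by push_cast; rfl,
          Complex.norm_real, Real.norm_of_nonneg, div_le_one ht]
        · linarith [Real.add_one_le_exp (-p.2)]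
        · have : Real.exp (-p.2) < 1 := Real.exp_lt_one_iff.2 (by linarith)
          exact div_nonneg (by linarith) ht.le
      have e2 : (-((p.2:ℂ) * (y + Complex.I * p.1))).re = -y * p.2 := by simp; ring
      rw [e2]
      refine mul_le_mul_of_nonneg_left ?_ (sg_nonneg _)
      exact mul_le_of_le_one_right (Real.exp_pos _).le e1

noncomputable def psi (x : ℝ) : ℝ := deriv (fun y => Real.log (Real.Gamma y)) x

lemma diffLG (x : ℝ) (hx : 0 < x) : DifferentiableAt ℝ (fun y => Real.log (Real.Gamma y)) x :=
  (Real.differentiableAt_Gamma (fun m => by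
    have : (0:ℝ) ≤ m := m.cast_nonneg
    linarith)).log (Real.Gamma_pos_of_pos hx).ne'

lemma LG_add (x : ℝ) (hx : 0 < x) :
    Real.log (Real.Gamma (x + 1)) = Real.log x + Real.log (Real.Gamma x) := by
  rw [Real.Gamma_add_one hx.ne', Real.log_mul hx.ne' (Real.Gamma_pos_of_pos hx).ne']

lemma psi_add_one (x : ℝ) (hx : 0 < x) : psi (x + 1) - psi x = x⁻¹ := by
  have h1 : HasDerivAt (fun y => Real.log (Real.Gamma (y + 1))) (psi (x + 1)) x :=
    HasDerivAt.comp_add_const x 1 (diffLG (x + 1) (by linarith)).hasDerivAt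
  have h2 : HasDerivAt (fun y => Real.log y + Real.log (Real.Gamma y)) (x⁻¹ + psi x) x :=
    (Real.hasDerivAt_log hx.ne').add (diffLG x hx).hasDerivAt
  have h3 : HasDerivAt (fun y => Real.log (Real.Gamma (y + 1))) (x⁻¹ + psi x) x := by
    refine h2.congr_of_eventuallyEq ?_
    filter_upwards [lt_mem_nhds hx] with y hy
    exact LG_add y hy
  rw [h1.unique h3]; ring

lemma psi_le (x : ℝ) (hx : 0 < x) : psi x ≤ Real.log x := by
  have := Real.convexOn_log_Gamma.deriv_le_slope (x := x) (y := x + 1) hx (by simp; linarith) (by linarith)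
    (diffLG x hx)
  rw [slope_def_field] at this
  simp only [Function.comp, LG_add x hx] at this
  simpa [psi, Function.comp_def] using this

lemma le_psi (x : ℝ) (hx : 0 < x) : Real.log x ≤ psi (x + 1) := by
  have := Real.convexOn_log_Gamma.slope_le_deriv (x := x) (y := x + 1) hx (by simp; linarith) (by linarith)
    (diffLG (x+1) (by linarith))
  rw [slope_def_field] at this
  simp only [Function.comp, LG_add x hx] at this
  simpa [psi, Function.comp_def] using this

lemma main_aux (y : ℝ) (hy : 0 < y) : LF y = psi (y + 1 / 2) := by
  set C := (π / 2 * ∫ w : ℝ, |w| * sg w) with hC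
  have hper : ∀ n : ℕ, LF (y + n) - psi (y + n + 1 / 2) = LF y - psi (y + 1 / 2) := by
    intro n
    induction n with
    | zero => simp
    | succ n ih =>
      have hn : 0 < y + n := by positivity
      have h1 := LF_add_one (y + n) hn
      have h2 := psi_add_one (y + n + 1 / 2) (by positivity)
      have h3 : ((psi (y + n + 1 / 2 + 1) : ℝ) : ℂ) - psi (y + n + 1 / 2) = ((y:ℂ) + n + 1 / 2)⁻¹ := by
        rw [← Complex.ofReal_sub, h2]; push_cast; rfl
      rw [← ih]
      push_cast at h1 ⊢
      rw [show y + (n + 1) = y + n + 1 by ring, show y + n + 1 + 1 / 2 = y + n + 1 / 2 + 1 by ring]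
      linear_combination h1 - h3
  have hb : ∀ n : ℕ, ‖LF y - psi (y + 1 / 2)‖ ≤ (C + 1) / (y + n) := by
    intro n
    have hn : 0 < y + n := by positivity
    rw [← hper n]
    have h1 := LF_dev (y + n) hn
    have h2 := psi_le (y + n + 1 / 2) (by positivity)
    have h3 := le_psi (y + n + 1 / 2) (by positivity)
    have h4 := psi_add_one (y + n + 1 / 2) (by positivity)
    have h5 : Real.log (y + n) ≤ Real.log (y + n + 1 / 2) := Real.log_le_log hn (by linarith)
    have h6 : Real.log (y + n + 1 / 2) ≤ Real.log (y + n) + 1 / 2 / (y + n) := by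
      have e : y + n + 1 / 2 = (y + n) * (1 + 1 / 2 / (y + n)) := by field_simp
      rw [e, Real.log_mul hn.ne' (by positivity)]
      have := Real.log_le_sub_one_of_pos (show 0 < 1 + 1 / 2 / (y + n) by positivity)
      linarith
    have h7 : (y + n + 1 / 2)⁻¹ ≤ 1 / (y + n) := by
      rw [one_div (y + (n:ℝ))]; exact inv_anti₀ hn (by linarith)
    have h8 : 1 / 2 / (y + n) ≤ 1 / (y + n) := by gcongr; norm_num
    have h9 : |Real.log (y + n) - psi (y + n + 1 / 2)| ≤ 1 / (y + n) := by
      rw [abs_le]; constructor <;> linarith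
    calc _ = ‖(LF (y + n) - Real.log (y + n)) + ((Real.log (y + n) - psi (y + n + 1 / 2) : ℝ) : ℂ)‖ := by
          congr 1; push_cast; ring
      _ ≤ C / (y + n) + 1 / (y + n) := by
          refine (norm_add_le _ _).trans (add_le_add h1 ?_)
          rw [Complex.norm_real]; exact h9
      _ = _ := by ring
  have hlim : Filter.Tendsto (fun n : ℕ => (C + 1) / (y + n)) Filter.atTop (nhds 0) :=
    Filter.Tendsto.const_div_atTop (Filter.tendsto_atTop_add_const_left _ y tendsto_natCast_atTop_atTop) _
  have := ge_of_tendsto' hlim hb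
  exact sub_eq_zero.1 (norm_le_zero_iff.1 this)

/-- For `x > 1/2`, `(π/2) ∫_ℝ sech²(πw) log(x+iw-1/2) dw = ψ(x)`, where
`ψ = (log Γ)'` is the digamma function (the imaginary parts cancel by symmetry). -/
theorem sech_log_moment (x : ℝ) (hx : 1 / 2 < x) :
    (π / 2 : ℂ) * ∫ w : ℝ,
        ((1 / Real.cosh (π * w)) ^ 2 : ℝ) • Complex.log ((x : ℂ) + Complex.I * w - 1 / 2) =
      ((deriv (fun y => Real.log (Real.Gamma y)) x : ℝ) : ℂ) := by
  have h := main_aux (x - 1 / 2) (by linarith)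
  rw [sub_add_cancel, psi, LF] at h
  rw [← h]
  congr 2
  ext w
  rw [sg]
  congr 2
  push_cast
  ring
end

section
/- For x > 1/2, (π/2) ∫_{-∞}^{∞} sech²(πw) (x + iw - 1/2)^{-1} dw = ∑_{k≥0} 1/(x+k)², i.e. the first negative moment of the shifted Bernoulli measure equals the Hurwitz zeta value ζ(2, x). -/
open MeasureTheory Real

lemma aux_sech_pos (w : ℝ) (hw : 0 < w) :
    (((π ^ 2 * (1 / Real.cosh (π * w)) ^ 2 : ℝ)) : ℂ) =
      ∑' n : ℤ, 1 / (((n : ℂ) + 1 / 2) + Complex.I * w) ^ 2 := by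
  set z : ℂ := 1 / 2 + Complex.I * w with hz
  have hzm : z ∈ UpperHalfPlane.upperHalfPlaneSet := by
    simp [UpperHalfPlane.upperHalfPlaneSet, hz, hw]
  have hsin : Complex.sin (π * z) = Complex.cosh (π * w) := by
    rw [hz, ← Complex.cos_mul_I, show (π : ℂ) * (1 / 2 + Complex.I * w) = (π * w * Complex.I) + π / 2 by ring,
      Complex.sin_add_pi_div_two]
  have hne : Complex.cosh (π * w) ≠ 0 := by
    rw [← Complex.ofReal_mul, ← Complex.ofReal_cosh]
    exact_mod_cast (Real.cosh_pos _).ne'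
  have h := iteratedDerivWithin_cot_pi_mul_eq_mul_tsum_div_pow (k := 1) le_rfl hzm
  have hd : HasDerivAt (fun x : ℂ ↦ π * Complex.cot (π * x)) (-(π ^ 2 / Complex.cosh (π * w) ^ 2)) z := by
    have h1 : HasDerivAt (fun x : ℂ ↦ (π : ℂ) * x) π z := by
      simpa using (hasDerivAt_id z).const_mul (π : ℂ)
    have h2 := (((Complex.hasDerivAt_cos _).comp z h1).div ((Complex.hasDerivAt_sin _).comp z h1)
      (by simp only [Function.comp]; rw [hsin]; exact hne)).const_mul (π : ℂ)
    have h3 := Complex.sin_sq_add_cos_sq (π * z)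
    refine h2.congr_deriv ?_
    simp only [Function.comp]
    rw [hsin] at h3 ⊢
    field_simp
    linear_combination (-1) * h3
  rw [iteratedDerivWithin_one, hd.hasDerivWithinAt.derivWithin
    (UpperHalfPlane.isOpen_upperHalfPlaneSet.uniqueDiffWithinAt hzm)] at h
  simp only [pow_one, Nat.factorial_one, Nat.cast_one, mul_one, neg_mul, one_mul, neg_inj] at h
  push_cast
  rw [div_pow, one_pow, mul_one_div, h]
  refine tsum_congr fun n => ?_
  rw [hz]; norm_num; ring

lemma aux_sech (w : ℝ) (hw : w ≠ 0) :
    (((π ^ 2 * (1 / Real.cosh (π * w)) ^ 2 : ℝ)) : ℂ) =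
      ∑' n : ℤ, 1 / (((n : ℂ) + 1 / 2) + Complex.I * w) ^ 2 := by
  rcases lt_or_gt_of_ne hw with h | h
  · have := congrArg (starRingEnd ℂ) (aux_sech_pos (-w) (by linarith))
    rw [Complex.conj_ofReal, Complex.conj_tsum] at this
    rw [mul_neg, Real.cosh_neg] at this
    rw [this]
    refine tsum_congr fun n => ?_
    simp [map_ofNat]
  · exact aux_sech_pos w h

lemma aux_ne (s : ℝ) (hs : s ≠ 0) (w : ℝ) : (s : ℂ) + Complex.I * w ≠ 0 := by
  intro h
  have := congrArg Complex.re h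
  simp at this
  exact hs this

lemma aux_bound (a : ℝ) (ha : 0 < a) : ∃ C : ℝ, 0 ≤ C ∧ ∀ s : ℝ, 1 / 2 ≤ |s| → ∀ w : ℝ,
    ‖1 / ((s : ℂ) + Complex.I * w) ^ 2 * ((a : ℂ) + Complex.I * w)⁻¹‖ ≤
      C * (1 / |s| ^ (3 / 2 : ℝ)) * ((1 : ℝ) + ‖w‖ ^ 2) ^ (-(3 / 2 : ℝ) / 2) := by
  refine ⟨(1 / 4 : ℝ) ^ (-(1 / 4) : ℝ) * (min (a ^ 2) 1) ^ (-(1 / 2) : ℝ), by positivity, fun s hs w => ?_⟩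
  have hspos : 0 < |s| := by linarith
  have hs2 : 1 / 4 ≤ s ^ 2 := by rw [← sq_abs]; nlinarith
  have hn : ∀ t : ℝ, ‖(t : ℂ) + Complex.I * w‖ ^ 2 = t ^ 2 + w ^ 2 := by
    intro t
    rw [← Complex.normSq_eq_norm_sq, Complex.normSq_apply]; simp; ring
  have hm : 0 < min (a ^ 2) 1 := by positivity
  have h1 : ‖1 / ((s : ℂ) + Complex.I * w) ^ 2‖ ≤
      (1 / 4 : ℝ) ^ (-(1 / 4) : ℝ) * (1 + w ^ 2) ^ (-(1 / 4) : ℝ) * (1 / |s| ^ (3 / 2 : ℝ)) := by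
    rw [norm_div, norm_one, norm_pow, hn, ← Real.mul_rpow (by norm_num) (by positivity),
      Real.rpow_neg (by positivity), ← one_div, one_div_mul_one_div]
    apply one_div_le_one_div_of_le (by positivity)
    have e1 : |s| ^ (3 / 2 : ℝ) = (s ^ 2) ^ (3 / 4 : ℝ) := by
      rw [← sq_abs, ← Real.rpow_natCast, ← Real.rpow_mul (abs_nonneg s)]; norm_num
    have e2 : s ^ 2 + w ^ 2 = (s ^ 2 + w ^ 2) ^ (1 / 4 : ℝ) * (s ^ 2 + w ^ 2) ^ (3 / 4 : ℝ) := by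
      rw [← Real.rpow_add (by positivity)]; norm_num
    rw [e1, e2]
    gcongr
    · nlinarith
    · nlinarith
  have h2 : ‖((a : ℂ) + Complex.I * w)⁻¹‖ ≤
      (min (a ^ 2) 1) ^ (-(1 / 2) : ℝ) * (1 + w ^ 2) ^ (-(1 / 2) : ℝ) := by
    have e : ‖(a : ℂ) + Complex.I * w‖ = (a ^ 2 + w ^ 2) ^ (1 / 2 : ℝ) := by
      rw [← hn, ← Real.sqrt_eq_rpow, Real.sqrt_sq (norm_nonneg _)]
    rw [norm_inv, e, ← Real.mul_rpow hm.le (by positivity), Real.rpow_neg (by positivity)]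
    gcongr
    nlinarith [min_le_left (a ^ 2) 1, min_le_right (a ^ 2) 1, sq_nonneg w]
  rw [norm_mul]
  refine (mul_le_mul h1 h2 (norm_nonneg _) (by positivity)).trans (le_of_eq ?_)
  have e3 : ((1 : ℝ) + ‖w‖ ^ 2) ^ (-(3 / 2 : ℝ) / 2) = (1 + w ^ 2) ^ (-(1 / 4) : ℝ) * (1 + w ^ 2) ^ (-(1 / 2) : ℝ) := by
    rw [← Real.rpow_add (by positivity), Real.norm_eq_abs, sq_abs]; norm_num
  rw [e3]; ring

lemma aux_intble0 : Integrable (fun w : ℝ => ((1 : ℝ) + ‖w‖ ^ 2) ^ (-(3 / 2 : ℝ) / 2)) :=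
  integrable_rpow_neg_one_add_norm_sq (by simp; norm_num)

lemma aux_intble (a : ℝ) (ha : 0 < a) (s : ℝ) (hs : 1 / 2 ≤ |s|) :
    Integrable (fun w : ℝ => 1 / ((s : ℂ) + Complex.I * w) ^ 2 * ((a : ℂ) + Complex.I * w)⁻¹) := by
  obtain ⟨C, hC, h⟩ := aux_bound a ha
  refine (aux_intble0.const_mul (C * (1 / |s| ^ (3 / 2 : ℝ)))).mono' ?_ (Filter.Eventually.of_forall (h s hs))
  exact Measurable.aestronglyMeasurable (by fun_prop)

lemma aux_loglim (a b : ℝ) (u v : ℂ) (hu : u ∈ Complex.slitPlane) (hv : v ∈ Complex.slitPlane) :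
    Filter.Tendsto (fun t : ℝ => Complex.log (a + u * t) - Complex.log (b + v * t)) Filter.atTop
      (nhds (Complex.log u - Complex.log v)) := by
  have key : ∀ (c : ℝ) (q : ℂ), q ∈ Complex.slitPlane →
      Filter.Tendsto (fun t : ℝ => Complex.log (((c / t : ℝ) : ℂ) + q)) Filter.atTop (nhds (Complex.log q)) := by
    intro c q hq
    have h1 : Filter.Tendsto (fun t : ℝ => ((c / t : ℝ) : ℂ) + q) Filter.atTop (nhds q) := by
      have := (Complex.continuous_ofReal.tendsto 0).comp
        (Filter.Tendsto.div_atTop (tendsto_const_nhds (x := c)) Filter.tendsto_id)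
      simpa using this.add_const q
    exact (continuousAt_clog hq).tendsto.comp h1
  have hne : ∀ (c : ℝ) (q : ℂ), q ∈ Complex.slitPlane → ∀ᶠ t : ℝ in Filter.atTop, ((c / t : ℝ) : ℂ) + q ≠ 0 := by
    intro c q hq
    have h1 : Filter.Tendsto (fun t : ℝ => ((c / t : ℝ) : ℂ) + q) Filter.atTop (nhds q) := by
      have := (Complex.continuous_ofReal.tendsto 0).comp
        (Filter.Tendsto.div_atTop (tendsto_const_nhds (x := c)) Filter.tendsto_id)
      simpa using this.add_const q
    exact h1.eventually_ne (Complex.slitPlane_ne_zero hq)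
  refine ((key a u hu).sub (key b v hv)).congr' ?_
  filter_upwards [Filter.eventually_gt_atTop 0, hne a u hu, hne b v hv] with t ht h1 h2
  have e : ∀ (c : ℝ) (q : ℂ), ((c / t : ℝ) : ℂ) + q ≠ 0 →
      Complex.log (c + q * t) = Real.log t + Complex.log (((c / t : ℝ) : ℂ) + q) := by
    intro c q h
    rw [← Complex.log_ofReal_mul ht h]
    congr 1
    have : (t : ℂ) ≠ 0 := by exact_mod_cast ht.ne'
    push_cast
    field_simp
  rw [e a u h1, e b v h2]; ring

lemma aux_lin (s : ℝ) (w : ℝ) : HasDerivAt (fun w : ℝ => (s : ℂ) + Complex.I * w) Complex.I w := by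
  simpa using ((Complex.ofRealCLM.hasDerivAt (x := w)).const_mul Complex.I).const_add (s : ℂ)

lemma aux_inv_top (s : ℝ) : Filter.Tendsto (fun w : ℝ => ((s : ℂ) + Complex.I * w)⁻¹) Filter.atTop (nhds 0) := by
  refine Filter.tendsto_inv₀_cobounded.comp (?_ : Filter.Tendsto (fun w : ℝ => (s : ℂ) + Complex.I * w) _ (Bornology.cobounded ℂ))
  rw [← tendsto_norm_atTop_iff_cobounded]
  refine Filter.tendsto_atTop_mono (fun w => ?_) Filter.tendsto_id
  refine le_trans ?_ (Complex.abs_im_le_norm _)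
  simpa using le_abs_self w

lemma aux_inv_bot (s : ℝ) : Filter.Tendsto (fun w : ℝ => ((s : ℂ) + Complex.I * w)⁻¹) Filter.atBot (nhds 0) := by
  refine Filter.tendsto_inv₀_cobounded.comp (?_ : Filter.Tendsto (fun w : ℝ => (s : ℂ) + Complex.I * w) _ (Bornology.cobounded ℂ))
  rw [← tendsto_norm_atTop_iff_cobounded]
  refine Filter.tendsto_atTop_mono (fun w => ?_) Filter.tendsto_neg_atBot_atTop
  refine le_trans ?_ (Complex.abs_im_le_norm _)
  simpa using neg_le_abs w

lemma aux_slitI : Complex.I ∈ Complex.slitPlane := by simp [Complex.mem_slitPlane_iff]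
lemma aux_slitnI : -Complex.I ∈ Complex.slitPlane := by simp [Complex.mem_slitPlane_iff]

/-- common computation; `c = ±1` with `c * s > 0`. -/
lemma aux_int (a : ℝ) (ha : 0 < a) (s c : ℝ) (hs : 1 / 2 ≤ |s|) (hsa : s ≠ a) (hc : c = 1 ∨ c = -1) (hcs : 0 < c * s) :
    ∫ w : ℝ, 1 / ((s : ℂ) + Complex.I * w) ^ 2 * ((a : ℂ) + Complex.I * w)⁻¹ =
      1 / ((s : ℂ) - a) ^ 2 * (-Complex.I) * ((Complex.log Complex.I - Complex.log (c * Complex.I)) -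
        (Complex.log (-Complex.I) - Complex.log (c * -Complex.I))) := by
  have hs0 : s ≠ 0 := by rintro rfl; simp at hcs
  have hsa' : (s : ℂ) - a ≠ 0 := by
    rw [sub_ne_zero]; exact_mod_cast hsa
  have hcI : (c : ℂ) * Complex.I ∈ Complex.slitPlane ∧ (c : ℂ) * -Complex.I ∈ Complex.slitPlane := by
    rcases hc with rfl | rfl <;> simp [Complex.mem_slitPlane_iff]
  have hc0 : (c : ℂ) ≠ 0 := by rcases hc with rfl | rfl <;> simp
  have hd : ∀ w : ℝ, HasDerivAt (fun w : ℝ => 1 / ((s : ℂ) - a) ^ 2 * (-Complex.I) *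
        (Complex.log ((a : ℂ) + Complex.I * w) - Complex.log ((c : ℂ) * ((s : ℂ) + Complex.I * w))) +
        (-Complex.I / ((s : ℂ) - a)) * ((s : ℂ) + Complex.I * w)⁻¹)
      (1 / ((s : ℂ) + Complex.I * w) ^ 2 * ((a : ℂ) + Complex.I * w)⁻¹) w := by
    intro w
    have n1 := aux_ne s hs0 w
    have n2 := aux_ne a ha.ne' w
    have d1 := (aux_lin a w).clog_real (by simp [Complex.mem_slitPlane_iff, ha])
    have d2 := ((aux_lin s w).const_mul (c : ℂ)).clog_real (by
      left; simpa using hcs)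
    have d3 := (aux_lin s w).inv n1
    refine (((d1.sub d2).const_mul (1 / ((s : ℂ) - a) ^ 2 * (-Complex.I))).add
      (d3.const_mul (-Complex.I / ((s : ℂ) - a)))).congr_deriv ?_
    rw [mul_div_mul_left _ _ hc0]
    have hI := Complex.I_sq
    generalize hp : (s : ℂ) + Complex.I * w = p at *
    generalize hq : (a : ℂ) + Complex.I * w = q at *
    have hpq : (s : ℂ) - a = p - q := by rw [← hp, ← hq]; ring
    have hpq' : p - q ≠ 0 := hpq ▸ hsa'
    rw [hpq]
    field_simp
    rw [hI]; ring
  have htop := ((aux_loglim a (c * s) Complex.I (c * Complex.I) aux_slitI hcI.1).const_mul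
    (1 / ((s : ℂ) - a) ^ 2 * (-Complex.I))).add ((aux_inv_top s).const_mul (-Complex.I / ((s : ℂ) - a)))
  have hbot := (((aux_loglim a (c * s) (-Complex.I) (c * -Complex.I) aux_slitnI hcI.2).comp
    Filter.tendsto_neg_atBot_atTop).const_mul
    (1 / ((s : ℂ) - a) ^ 2 * (-Complex.I))).add ((aux_inv_bot s).const_mul (-Complex.I / ((s : ℂ) - a)))
  rw [integral_of_hasDerivAt_of_tendsto hd (aux_intble a ha s hs) (hbot.congr fun w => ?_)
    (htop.congr fun w => ?_)]
  · ring
  · simp only [Function.comp]; push_cast; ring_nf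
  · push_cast; ring_nf

lemma aux_int_pos (a : ℝ) (ha : 0 < a) (s : ℝ) (hs : 1 / 2 ≤ s) :
    ∫ w : ℝ, 1 / ((s : ℂ) + Complex.I * w) ^ 2 * ((a : ℂ) + Complex.I * w)⁻¹ = 0 := by
  have hs' : 1 / 2 ≤ |s| := by rwa [abs_of_nonneg (by linarith)]
  by_cases hsa : s = a
  · subst hsa
    have hd : ∀ w : ℝ, HasDerivAt (fun w : ℝ => (Complex.I / 2) * (((s : ℂ) + Complex.I * w)⁻¹) ^ 2)
        (1 / ((s : ℂ) + Complex.I * w) ^ 2 * ((s : ℂ) + Complex.I * w)⁻¹) w := by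
      intro w
      have n1 := aux_ne s ha.ne' w
      refine ((((aux_lin s w).inv n1).pow 2).const_mul (Complex.I / 2)).congr_deriv ?_
      have hI := Complex.I_sq
      generalize hp : (s : ℂ) + Complex.I * w = p at *
      field_simp
      rw [hI]; simp [hp, n1]
    have htop := ((aux_inv_top s).pow 2).const_mul (Complex.I / 2)
    have hbot := ((aux_inv_bot s).pow 2).const_mul (Complex.I / 2)
    rw [integral_of_hasDerivAt_of_tendsto hd (aux_intble s ha s hs') hbot htop]
    simp
  · rw [aux_int a ha s 1 hs' hsa (Or.inl rfl) (by linarith)]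
    simp

lemma aux_int_neg (a : ℝ) (ha : 0 < a) (s : ℝ) (hs : s ≤ -(1 / 2)) :
    ∫ w : ℝ, 1 / ((s : ℂ) + Complex.I * w) ^ 2 * ((a : ℂ) + Complex.I * w)⁻¹ =
      2 * π / ((s : ℂ) - a) ^ 2 := by
  have hs' : 1 / 2 ≤ |s| := by rw [abs_of_nonpos (by linarith)]; linarith
  rw [aux_int a ha s (-1) hs' (by linarith) (Or.inr rfl) (by linarith)]
  have e1 : (((-1 : ℝ) : ℂ)) * Complex.I = -Complex.I := by simp
  have e2 : (((-1 : ℝ) : ℂ)) * -Complex.I = Complex.I := by simp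
  rw [e1, e2, Complex.log_I, Complex.log_neg_I]
  linear_combination (-2 * π / ((s : ℂ) - a) ^ 2) * Complex.I_sq

theorem sech_first_negative_moment (x : ℝ) (hx : 1 / 2 < x) :
    (π / 2 : ℂ) * ∫ w : ℝ,
        ((1 / Real.cosh (π * w)) ^ 2 : ℝ) • (((x : ℂ) + Complex.I * w - 1 / 2)⁻¹) =
      ((∑' k : ℕ, 1 / (x + k) ^ 2 : ℝ) : ℂ) := by
  set a : ℝ := x - 1 / 2 with ha'
  have ha : 0 < a := by rw [ha']; linarith
  have hn : ∀ n : ℤ, 1 / 2 ≤ |(n : ℝ) + 1 / 2| := by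
    intro n
    rcases le_or_gt 0 n with h | h
    · have : (0 : ℝ) ≤ n := by exact_mod_cast h
      rw [abs_of_nonneg (by linarith)]; linarith
    · have : (n : ℝ) ≤ -1 := by exact_mod_cast (by omega : n ≤ -1)
      rw [abs_of_nonpos (by linarith)]; linarith
  set F : ℤ → ℝ → ℂ := fun n w => 1 / ((((n : ℝ) + 1 / 2 : ℝ) : ℂ) + Complex.I * w) ^ 2 * ((a : ℂ) + Complex.I * w)⁻¹ with hF
  have hint : ∀ n, Integrable (F n) := fun n => aux_intble a ha _ (hn n)
  have hsum : Summable fun n => ∫ w, ‖F n w‖ := by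
    obtain ⟨C, hC, h⟩ := aux_bound a ha
    have hs := (((Real.summable_one_div_int_add_rpow (1 / 2) (3 / 2)).2 (by norm_num)).mul_left C).mul_right
      (∫ w : ℝ, ((1 : ℝ) + ‖w‖ ^ 2) ^ (-(3 / 2 : ℝ) / 2))
    refine Summable.of_nonneg_of_le (fun n => integral_nonneg fun _ => norm_nonneg _) (fun n => ?_) hs
    rw [← integral_const_mul]
    exact integral_mono (hint n).norm (aux_intble0.const_mul _) (h _ (hn n))
  have hS := hasSum_integral_of_summable_integral_norm hint hsum
  have hval : ∫ w, ∑' n, F n w = (π : ℂ) ^ 2 * ∫ w : ℝ,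
        ((1 / Real.cosh (π * w)) ^ 2 : ℝ) • (((x : ℂ) + Complex.I * w - 1 / 2)⁻¹) := by
    rw [← integral_const_mul]
    apply integral_congr_ae
    filter_upwards [MeasureTheory.Measure.ae_ne volume (0 : ℝ)] with w hw
    simp only [hF]
    rw [tsum_mul_right]
    have := aux_sech w hw
    push_cast at this ⊢
    rw [← this, Complex.real_smul, ha']
    push_cast
    rw [show (x : ℂ) - 1 / 2 + Complex.I * w = x + Complex.I * w - 1 / 2 by ring]
    ring
  have hS2 := hS.nat_add_neg_add_one
  rw [hval] at hS2
  have hterm : ∀ k : ℕ, (∫ w, F k w) + ∫ w, F (-((k : ℤ) + 1)) w = 2 * π * ((1 / (x + k) ^ 2 : ℝ) : ℂ) := by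
    intro k
    have hk : (0 : ℝ) ≤ k := Nat.cast_nonneg k
    simp only [hF]
    rw [aux_int_pos a ha _ (by push_cast; linarith), aux_int_neg a ha _ (by push_cast; linarith), ha']
    push_cast
    rw [show (-((k : ℂ) + 1) + 1 / 2 - (x - 1 / 2)) = -(x + k) by ring]
    rw [neg_sq]; ring
  simp only [hterm] at hS2
  have h3 := hS2.tsum_eq
  rw [tsum_mul_left] at h3
  rw [Complex.ofReal_tsum]
  have hpi : (π : ℂ) ≠ 0 := by exact_mod_cast Real.pi_ne_zero
  apply mul_left_cancel₀ (mul_ne_zero two_ne_zero hpi)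
  rw [h3]; ring
end
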